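/- Let X be a Cantor space with a fixed compatible metric and K a dynamical simplex on X. Given any KR-partition T for K and any ε > 0, there exists a KR-partition S for K which refines T and whose base and top both have diameter less than ε. -/

import Mathlib

open MeasureTheory

namespace DynSimplex

variable {X : Type*} [TopologicalSpace X] [MeasurableSpace X] [OpensMeasurableSpace X]

/-- `g` preserves the probability measure `μ`, i.e. `g_*μ = μ`. -/
def Preserves (g : X ≃ₜ X) (μ : ProbabilityMeasure X) : Prop :=
  (μ : Measure X).map g = (μ : Measure X)

/-- A homeomorphism is minimal if all of its (two-sided) orbits are dense. -/
def IsMinimal (g : X ≃ₜ X) : Prop :=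
  ∀ x : X, Dense (Set.range fun n : ℤ => (g.toEquiv ^ n) x)

/-- A set of probability measures is good if for all clopen `A`, `B` with `μ A < μ B` for
all `μ ∈ K`, there is a clopen `C ⊆ B` with `μ C = μ A` for all `μ ∈ K`. -/
def Good (K : Set (ProbabilityMeasure X)) : Prop :=
  ∀ A B : Set X, IsClopen A → IsClopen B → (∀ μ ∈ K, μ A < μ B) →
    ∃ C : Set X, IsClopen C ∧ C ⊆ B ∧ ∀ μ ∈ K, μ C = μ A

/-- Approximate divisibility of a set of probability measures. -/
def ApproximatelyDivisible (K : Set (ProbabilityMeasure X)) : Prop :=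
  ∀ A : Set X, IsClopen A → ∀ n : ℕ, 1 ≤ n → ∀ ε : ℝ, 0 < ε →
    ∃ B : Set X, IsClopen B ∧ B ⊆ A ∧
      ∀ μ ∈ K, (μ A : ℝ) - ε ≤ (n : ℝ) * (μ B : ℝ) ∧ (n : ℝ) * (μ B : ℝ) ≤ (μ A : ℝ)

/-- A probability measure has full support if every nonempty open set has positive measure. -/
def FullSupport (μ : ProbabilityMeasure X) : Prop :=
  ∀ U : Set X, IsOpen U → U.Nonempty → 0 < μ U

/-- A probability measure is atomless if all singletons are null. -/
def Atomless (μ : ProbabilityMeasure X) : Prop :=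
  ∀ x : X, μ {x} = 0

/-- Convexity of a set of probability measures (as a subset of the `ℝ≥0`-module of
finite measures). -/
def ProbConvex (K : Set (ProbabilityMeasure X)) : Prop :=
  Convex NNReal (ProbabilityMeasure.toFiniteMeasure '' K)

/-- The set of extreme points of a set of probability measures. -/
def ProbExtremePoints (K : Set (ProbabilityMeasure X)) : Set (ProbabilityMeasure X) :=
  ProbabilityMeasure.toFiniteMeasure ⁻¹'
    (Set.extremePoints NNReal (ProbabilityMeasure.toFiniteMeasure '' K))

/-- A dynamical simplex: a nonempty compact convex set of atomless, fully supported
probability measures which is good and approximately divisible. -/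
def DynamicalSimplex (K : Set (ProbabilityMeasure X)) : Prop :=
  K.Nonempty ∧ IsCompact K ∧ ProbConvex K ∧
    (∀ μ ∈ K, Atomless μ ∧ FullSupport μ) ∧ Good K ∧ ApproximatelyDivisible K

/-- Membership in the full group of `g`. -/
def InFullGroup (g h : X ≃ₜ X) : Prop :=
  ∀ x : X, ∃ n : ℤ, h x = (g.toEquiv ^ n) x

/-- Membership in the topological full group of `g`: `h` is given piecewise by powers of `g`
on a finite clopen partition of `X`. -/
def InTopologicalFullGroup (g h : X ≃ₜ X) : Prop :=
  ∃ (k : ℕ) (A : Fin k → Set X) (n : Fin k → ℤ),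
    (∀ i, IsClopen (A i)) ∧ (∀ x : X, ∃! i, x ∈ A i) ∧
    ∀ i, ∀ x ∈ A i, h x = (g.toEquiv ^ (n i)) x

/-- `g` preserves every measure in `K` (i.e. `g` belongs to the group `G`). -/
def PreservesAll (K : Set (ProbabilityMeasure X)) (g : X ≃ₜ X) : Prop :=
  ∀ μ ∈ K, Preserves g μ

/-- `g` is `K`-saturated: any two `K`-equivalent clopen sets are mapped one to the other by
an element of the topological full group of `g`. -/
def KSaturated (K : Set (ProbabilityMeasure X)) (g : X ≃ₜ X) : Prop :=
  ∀ U V : Set X, IsClopen U → IsClopen V → (∀ μ ∈ K, μ U = μ V) →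
    ∃ h : X ≃ₜ X, InTopologicalFullGroup g h ∧ h '' U = V

/-- The topology of uniform convergence on the homeomorphism group of a compact space
(the compact-open topology, induced from `C(X, X)`). -/
instance : TopologicalSpace (X ≃ₜ X) :=
  TopologicalSpace.induced (fun h : X ≃ₜ X => (h : C(X, X))) inferInstance

/-- A KR-partition for `K`: a finite family of columns, each column being a finite sequence of
clopen sets which are all `K`-equivalent, the atoms of all columns forming a partition of `X`. -/
structure KRPartition (X : Type*) [TopologicalSpace X] [MeasurableSpace X]
    (K : Set (ProbabilityMeasure X)) where
  numCols : ℕ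
  height : Fin numCols → ℕ
  atom : (i : Fin numCols) → Fin (height i + 1) → Set X
  clopen : ∀ i j, IsClopen (atom i j)
  equivK : ∀ i j j', ∀ μ ∈ K, μ (atom i j) = μ (atom i j')
  partition : ∀ x : X, ∃! p : (i : Fin numCols) × Fin (height i + 1), x ∈ atom p.1 p.2

/-- The base of a KR-partition: the union of the first atoms of the columns. -/
def KRPartition.base {K : Set (ProbabilityMeasure X)} (T : KRPartition X K) : Set X :=
  ⋃ i, T.atom i 0

/-- The top of a KR-partition: the union of the last atoms of the columns. -/
def KRPartition.top {K : Set (ProbabilityMeasure X)} (T : KRPartition X K) : Set X :=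
  ⋃ i, T.atom i (Fin.last _)

/-- `S` refines `T`: the base (resp. top) of `S` is contained in the base (resp. top) of `T`,
and every column of `S` is obtained by cutting and stacking columns of `T`. -/
def KRPartition.Refines {K : Set (ProbabilityMeasure X)} (S T : KRPartition X K) : Prop :=
  S.base ⊆ T.base ∧ S.top ⊆ T.top ∧
  ∀ c : Fin S.numCols, ∃ (m : ℕ) (idx : Fin (m + 1) → Fin T.numCols)
    (piece : (k : Fin (m + 1)) → Fin (T.height (idx k) + 1) → Set X),
    (∀ k j, piece k j ⊆ T.atom (idx k) j) ∧
    (S.height c + 1 = ∑ k : Fin (m + 1), (T.height (idx k) + 1)) ∧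
    ∀ (k : Fin (m + 1)) (j : Fin (T.height (idx k) + 1))
      (hlt : (∑ l ∈ Finset.Iio k, (T.height (idx l) + 1)) + (j : ℕ) < S.height c + 1),
      S.atom c ⟨(∑ l ∈ Finset.Iio k, (T.height (idx l) + 1)) + (j : ℕ), hlt⟩ = piece k j

/-- A KR-partition is compatible with a clopen set `U` if `U` is a union of its atoms,
equivalently every atom is either contained in `U` or disjoint from it. -/
def KRPartition.Compatible {K : Set (ProbabilityMeasure X)} (S : KRPartition X K)
    (U : Set X) : Prop :=
  ∀ i j, S.atom i j ⊆ U ∨ Disjoint (S.atom i j) U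

end DynSimplex

/-!
The base and the top of the refinement are prescribed in advance. Goodness provides `K`-equivalent
clopen sets `U` in the base and `V` in the top of `T`, as small as desired, such that the subcolumns
of `T` starting at `U` and ending at `V` are disjoint. By compactness of `K` the measures of `U` are
bounded away from `0`, and since the measures in `K` have no atoms the rest of `T` can be sliced
into finitely many subcolumns whose bases have smaller measure than `U`. Goodness copies each of
these bases into `U`. Sort the points of `U` by the copies containing them: over each class, stack
the first subcolumn, then the corresponding pieces of the subcolumns whose copies contain the class,
in a fixed order, and then the last subcolumn. The new base is contained in `U` and the new top
in `V`.
-/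

namespace DynSimplex

open Set

section Labelling

variable {X ι : Type*} [TopologicalSpace X]

/-- The labelling of a space partitioned into the open sets `W i` which sends a point to the index
of its piece. Finite clopen partitions are handled throughout as locally constant labellings. -/
noncomputable def partitionIndex (W : ι → Set X) (hW : ∀ i, IsOpen (W i))
    (hpart : ∀ x, ∃! i, x ∈ W i) : LocallyConstant X ι where
  toFun x := (hpart x).choose
  isLocallyConstant := (IsLocallyConstant.iff_exists_open _).2 fun x =>
    ⟨W _, hW _, (hpart x).choose_spec.1, fun y hy => ((hpart y).choose_spec.2 _ hy).symm⟩

theorem partitionIndex_eq_iff {W : ι → Set X} {hW : ∀ i, IsOpen (W i)}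
    {hpart : ∀ x, ∃! i, x ∈ W i} {x : X} {i : ι} :
    partitionIndex W hW hpart x = i ↔ x ∈ W i :=
  ⟨fun h => h ▸ (hpart x).choose_spec.1, fun h => ((hpart x).choose_spec.2 i h).symm⟩

theorem preimage_partitionIndex {W : ι → Set X} {hW : ∀ i, IsOpen (W i)}
    {hpart : ∀ x, ∃! i, x ∈ W i} {i : ι} : partitionIndex W hW hpart ⁻¹' {i} = W i :=
  Set.ext fun _ => partitionIndex_eq_iff

theorem isClopen_fiber (f : LocallyConstant X ι) (i : ι) : IsClopen (f ⁻¹' {i}) :=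
  f.isLocallyConstant.isClopen_fiber i

open Classical in
/-- The labelling `f` modified to take the constant value `a` on the clopen set `C`. -/
noncomputable def relabelOn {C : Set X} (hC : IsClopen C) (a : ι) (f : LocallyConstant X ι) :
    LocallyConstant X ι where
  toFun x := if x ∈ C then a else f x
  isLocallyConstant := (IsLocallyConstant.iff_eventually_eq _).2 fun x => by
    by_cases hx : x ∈ C
    · filter_upwards [hC.isOpen.mem_nhds hx] with y hy
      simp only [hx, hy, if_true]
    · filter_upwards [hC.compl.isOpen.mem_nhds hx,
        (IsLocallyConstant.iff_eventually_eq f).1 f.isLocallyConstant x] with y hy hfy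
      simp only [hx, if_neg hy, if_false, hfy]

theorem preimage_relabelOn_self {C : Set X} (hC : IsClopen C) (a : ι) (f : LocallyConstant X ι) :
    relabelOn hC a f ⁻¹' {a} = C ∪ f ⁻¹' {a} := by
  ext x
  by_cases hx : x ∈ C <;> simp [relabelOn, hx]

theorem preimage_relabelOn_of_ne {C : Set X} (hC : IsClopen C) {a i : ι} (f : LocallyConstant X ι)
    (hi : i ≠ a) : relabelOn hC a f ⁻¹' {i} = f ⁻¹' {i} \ C := by
  ext x
  by_cases hx : x ∈ C <;> simp [relabelOn, hx, hi.symm]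

theorem exists_locallyConstant_fiber_subset [CompactSpace X] [T2Space X]
    [TotallyDisconnectedSpace X] {U : ι → Set X} (hU : ∀ i, IsOpen (U i))
    (hcover : ⋃ i, U i = univ) :
    ∃ (M : ℕ) (f : LocallyConstant X (Fin M)), ∀ m, ∃ i, f ⁻¹' {m} ⊆ U i := by
  obtain ⟨M, W, hWU, hW, hdisj⟩ := (TopologicalSpace.IsOpenCover.of_sets hU
    hcover).exists_finite_nonempty_disjoint_clopen_cover
  have hpart (x) : ∃! m, x ∈ (W m : Set X) := by
    obtain ⟨m, hm⟩ := mem_iUnion.1 (hW (mem_univ x))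
    exact ⟨m, hm, fun m' hm' => by_contra fun h =>
      (TopologicalSpace.Clopens.coe_disjoint.2 (hdisj h)).notMem_of_mem_left hm' hm⟩
  refine ⟨M, partitionIndex (fun m => W m) (fun m => (W m).isOpen) hpart, fun m => ?_⟩
  obtain ⟨i, hi⟩ := (hWU m).2
  exact ⟨i, preimage_partitionIndex.trans_subset hi⟩

end Labelling

section KEquiv

variable {X : Type*} [MeasurableSpace X] {K : Set (ProbabilityMeasure X)} {A A' B B' C : Set X}

/-- The relation `A ∼_K B`: every measure in `K` gives `A` and `B` the same mass. -/
def KEquiv (K : Set (ProbabilityMeasure X)) (A B : Set X) : Prop :=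
  ∀ μ ∈ K, μ A = μ B

theorem KEquiv.refl (A : Set X) : KEquiv K A A :=
  fun _ _ => rfl

theorem KEquiv.symm (h : KEquiv K A B) : KEquiv K B A :=
  fun μ hμ => (h μ hμ).symm

theorem KEquiv.trans (h : KEquiv K A B) (h' : KEquiv K B C) : KEquiv K A C :=
  fun μ hμ => (h μ hμ).trans (h' μ hμ)

theorem measure_sdiff_add (μ : ProbabilityMeasure X) (hB : MeasurableSet B) (h : B ⊆ A) :
    μ (A \ B) + μ B = μ A := by
  rw [← ENNReal.coe_inj]
  push_cast
  simpa [inter_eq_self_of_subset_right h] using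
    measure_sdiff_add_inter (μ := (μ : Measure X)) A hB

theorem KEquiv.sdiff (h : KEquiv K A B) (h' : KEquiv K A' B') (hA' : MeasurableSet A')
    (hB' : MeasurableSet B') (hA : A' ⊆ A) (hB : B' ⊆ B) : KEquiv K (A \ A') (B \ B') := by
  intro μ hμ
  rw [← add_left_inj (μ A'), measure_sdiff_add μ hA' hA, h' μ hμ, measure_sdiff_add μ hB' hB,
    h μ hμ]

variable [TopologicalSpace X]

theorem KEquiv.eq_empty (h : KEquiv K A ∅) (hne : K.Nonempty) (hfull : ∀ μ ∈ K, FullSupport μ)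
    (hA : IsOpen A) : A = ∅ := by
  obtain ⟨μ, hμ⟩ := hne
  by_contra hAne
  have hpos : 0 < μ A := hfull μ hμ A hA (nonempty_iff_ne_empty.2 hAne)
  simp [h μ hμ] at hpos

theorem KEquiv.nonempty (h : KEquiv K A B) (hne : K.Nonempty) (hfull : ∀ μ ∈ K, FullSupport μ)
    (hA : IsOpen A) (hAne : A.Nonempty) : B.Nonempty := by
  rw [nonempty_iff_ne_empty]
  rintro rfl
  exact hAne.ne_empty (h.eq_empty hne hfull hA)

variable [OpensMeasurableSpace X]

/-- Goodness asks for strict inequalities; full support provides them when `A'` is a proper subset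
of `A`. -/
theorem KEquiv.exists_subset (h : KEquiv K A B) (hgood : Good K) (hfull : ∀ μ ∈ K, FullSupport μ)
    (hA : IsClopen A) (hB : IsClopen B) (hA' : IsClopen A') (hsub : A' ⊆ A) :
    ∃ B' ⊆ B, IsClopen B' ∧ KEquiv K B' A' := by
  rcases hsub.eq_or_ssubset with rfl | hlt
  · exact ⟨B, Subset.rfl, hB, h.symm⟩
  · obtain ⟨C, hC, hCB, hCA'⟩ := hgood A' B hA' hB fun μ hμ => by
      rw [← h μ hμ, ← measure_sdiff_add μ hA'.isOpen.measurableSet hsub]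
      exact lt_add_of_pos_left _ (hfull μ hμ _ (hA.diff hA').isOpen (nonempty_of_ssubset hlt))
    exact ⟨C, hCB, hC, hCA'⟩

/-- Induction on the labels in use: copy the piece labelled `a`, then the rest of the partition
into the complement of that copy. -/
theorem KEquiv.exists_locallyConstant_of_subset {ι : Type*} (hne : K.Nonempty) (hgood : Good K)
    (hfull : ∀ μ ∈ K, FullSupport μ) (f : LocallyConstant X ι) (s : Finset ι) :
    ∀ {A B : Set X}, KEquiv K A B → IsClopen A → IsClopen B → A ⊆ f ⁻¹' s →
      ∃ g : LocallyConstant X ι, ∀ i, KEquiv K (B ∩ g ⁻¹' {i}) (A ∩ f ⁻¹' {i}) := by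
  classical
  induction s using Finset.induction_on with
  | empty =>
    intro A B h hA hB hAs
    obtain rfl : A = ∅ := by simpa using hAs
    obtain rfl : B = ∅ := h.symm.eq_empty hne hfull hB.isOpen
    exact ⟨f, fun i => by simpa only [empty_inter] using KEquiv.refl ∅⟩
  | insert a s _ ih =>
    intro A B h hA hB hAs
    have hAa : IsClopen (A ∩ f ⁻¹' {a}) := hA.inter (isClopen_fiber f a)
    obtain ⟨C, hCB, hC, hCa⟩ := h.exists_subset hgood hfull hA hB hAa inter_subset_left
    obtain ⟨g, hg⟩ := ih (h.sdiff hCa.symm hAa.isOpen.measurableSet hC.isOpen.measurableSet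
      inter_subset_left hCB) (hA.diff hAa) (hB.diff hC) (by grind)
    refine ⟨relabelOn hC a g, fun i => ?_⟩
    obtain rfl | hi := eq_or_ne i a
    · have hAi : (A \ (A ∩ f ⁻¹' {i})) ∩ f ⁻¹' {i} = ∅ := by grind
      have hBi : (B \ C) ∩ g ⁻¹' {i} = ∅ :=
        (hAi ▸ hg i).eq_empty hne hfull ((hB.diff hC).inter (isClopen_fiber g i)).isOpen
      have hCi : B ∩ (C ∪ g ⁻¹' {i}) = C ∪ (B \ C) ∩ g ⁻¹' {i} := by
        rw [inter_union_distrib_left, inter_eq_self_of_subset_right hCB]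
        grind
      rwa [preimage_relabelOn_self, hCi, hBi, union_empty]
    · rw [preimage_relabelOn_of_ne hC g hi, ← inter_sdiff_assoc, inter_sdiff_right_comm]
      convert hg i using 1
      grind

theorem KEquiv.exists_locallyConstant {ι : Type*} [Finite ι] (h : KEquiv K A B) (hne : K.Nonempty)
    (hgood : Good K) (hfull : ∀ μ ∈ K, FullSupport μ) (hA : IsClopen A) (hB : IsClopen B)
    (f : LocallyConstant X ι) :
    ∃ g : LocallyConstant X ι, ∀ i, KEquiv K (B ∩ g ⁻¹' {i}) (A ∩ f ⁻¹' {i}) := by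
  have := Fintype.ofFinite ι
  exact exists_locallyConstant_of_subset hne hgood hfull f Finset.univ h hA hB (by simp)

theorem exists_locallyConstant_of_kEquiv {ι κ : Type*} [Finite ι] (hne : K.Nonempty)
    (hgood : Good K) (hfull : ∀ μ ∈ K, FullSupport μ) (f : LocallyConstant X ι)
    (q : LocallyConstant X κ) {A B : κ → Set X} (h : ∀ k, KEquiv K (A k) (B k))
    (hA : ∀ k, IsClopen (A k)) (hB : ∀ k, IsClopen (B k)) (hBq : ∀ k, B k ⊆ q ⁻¹' {k}) :
    ∃ g : LocallyConstant X ι, ∀ k i, KEquiv K (B k ∩ g ⁻¹' {i}) (A k ∩ f ⁻¹' {i}) := by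
  choose g hg using fun k => (h k).exists_locallyConstant hne hgood hfull (hA k) (hB k) f
  refine ⟨⟨fun x => g (q x) x, (IsLocallyConstant.iff_eventually_eq _).2 fun x => ?_⟩,
    fun k i => ?_⟩
  · filter_upwards [q.isLocallyConstant.eventually_eq x,
      (g (q x)).isLocallyConstant.eventually_eq x] with y hqy hgy
    exact (congrArg (g · y) hqy).trans hgy
  · convert hg k i using 1
    ext x
    refine and_congr_right fun hx => ?_
    simp [show q x = k from hBq k hx]

end KEquiv

namespace KRPartition

variable {X : Type*} [TopologicalSpace X] [MeasurableSpace X] {K : Set (ProbabilityMeasure X)}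

/-- The pair (column, level) of the atom of `T` containing a given point. -/
noncomputable def address (T : KRPartition X K) :
    LocallyConstant X ((i : Fin T.numCols) × Fin (T.height i + 1)) :=
  partitionIndex (fun p => T.atom p.1 p.2) (fun p => (T.clopen p.1 p.2).isOpen) T.partition

/-- The column of `T` containing a given point. -/
noncomputable def column (T : KRPartition X K) : LocallyConstant X (Fin T.numCols) :=
  T.address.map Sigma.fst

variable (T : KRPartition X K)

theorem address_eq_iff {x : X} {i : Fin T.numCols} {j : Fin (T.height i + 1)} :
    T.address x = ⟨i, j⟩ ↔ x ∈ T.atom i j :=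
  partitionIndex_eq_iff

theorem column_eq_of_mem {x : X} {i : Fin T.numCols} {j : Fin (T.height i + 1)}
    (hx : x ∈ T.atom i j) : T.column x = i :=
  congrArg Sigma.fst (T.address_eq_iff.2 hx)

theorem disjoint_atom {i : Fin T.numCols} {j j' : Fin (T.height i + 1)} (h : j ≠ j') :
    Disjoint (T.atom i j) (T.atom i j') :=
  disjoint_left.2 fun x hx hx' =>
    h (by simpa [T.address_eq_iff.2 hx] using T.address_eq_iff.2 hx')

theorem exists_forall_atom_nonempty [Nonempty X] (hne : K.Nonempty)
    (hfull : ∀ μ ∈ K, FullSupport μ) : ∃ i, ∀ j, (T.atom i j).Nonempty := by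
  obtain ⟨x⟩ := ‹Nonempty X›
  obtain ⟨⟨i, j₀⟩, hx, -⟩ := T.partition x
  exact ⟨i, fun j => KEquiv.nonempty (T.equivK i j₀ j) hne hfull (T.clopen i j₀).isOpen ⟨x, hx⟩⟩

/-- A clopen set is vertical if it cuts all levels of each column of `T` in `K`-equivalent sets,
so that it is a union of subcolumns. -/
structure IsVertical (A : Set X) : Prop where
  isClopen : IsClopen A
  equivK : ∀ i j j', KEquiv K (T.atom i j ∩ A) (T.atom i j' ∩ A)

variable {T}

theorem isVertical_univ : T.IsVertical univ :=
  ⟨isClopen_univ, fun i j j' => by simpa only [KEquiv, inter_univ] using T.equivK i j j'⟩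

variable (T) in
/-- A partition of the columns of `T` into subcolumns indexed by `τ`, the one of index `t` being
part of the column `col t`. Subcolumns may be empty. -/
structure Slicing (τ : Type*) where
  label : LocallyConstant X τ
  col : τ → Fin T.numCols
  col_label : ∀ x, col (label x) = T.column x
  equivK : ∀ t j j',
    KEquiv K (T.atom (col t) j ∩ label ⁻¹' {t}) (T.atom (col t) j' ∩ label ⁻¹' {t})

namespace Slicing

variable {τ : Type*} (s : T.Slicing τ)

/-- The levels of the subcolumns of a slicing. -/
def level (t : τ) (j : Fin (T.height (s.col t) + 1)) : Set X :=
  T.atom (s.col t) j ∩ s.label ⁻¹' {t}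

theorem isClopen_level (t : τ) (j : Fin (T.height (s.col t) + 1)) : IsClopen (s.level t j) :=
  (T.clopen _ j).inter (isClopen_fiber s.label t)

theorem existsUnique_mem_level (x : X) :
    ∃! p : (t : τ) × Fin (T.height (s.col t) + 1), x ∈ s.level p.1 p.2 := by
  obtain ⟨⟨i, j⟩, hx, huniq⟩ := T.partition x
  obtain rfl : s.col (s.label x) = i := (s.col_label x).trans (T.column_eq_of_mem hx)
  refine ⟨⟨s.label x, j⟩, ⟨hx, rfl⟩, ?_⟩
  rintro ⟨t, j'⟩ ⟨hj', rfl : s.label x = t⟩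
  simpa using huniq ⟨_, j'⟩ hj'

end Slicing

section Vertical

variable [OpensMeasurableSpace X] {A B : Set X}

theorem IsVertical.sdiff (hA : T.IsVertical A) (hB : T.IsVertical B) (h : B ⊆ A) :
    T.IsVertical (A \ B) where
  isClopen := hA.isClopen.diff hB.isClopen
  equivK i j j' := by
    have hmeas (j) : MeasurableSet (T.atom i j ∩ B) :=
      ((T.clopen i j).inter hB.isClopen).isOpen.measurableSet
    simpa only [inter_sdiff_distrib_left] using
      (hA.equivK i j j').sdiff (hB.equivK i j j') (hmeas j) (hmeas j')
        (inter_subset_inter_right _ h) (inter_subset_inter_right _ h)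

theorem IsVertical.exists_subset (hA : T.IsVertical A) (hgood : Good K)
    (hfull : ∀ μ ∈ K, FullSupport μ) {i : Fin T.numCols} (j₀ : Fin (T.height i + 1)) {U : Set X}
    (hU : IsClopen U) (hUA : U ⊆ T.atom i j₀ ∩ A) :
    ∃ B, T.IsVertical B ∧ B ⊆ A ∩ T.column ⁻¹' {i} ∧ T.atom i j₀ ∩ B = U := by
  have hcopy (j) : ∃ V ⊆ T.atom i j ∩ A, IsClopen V ∧ KEquiv K V U ∧ (j = j₀ → V = U) := by
    obtain rfl | hj := eq_or_ne j j₀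
    · exact ⟨U, hUA, hU, KEquiv.refl U, fun _ => rfl⟩
    · obtain ⟨V, hVA, hV, hVU⟩ := (hA.equivK i j₀ j).exists_subset hgood hfull
        ((T.clopen i j₀).inter hA.isClopen) ((T.clopen i j).inter hA.isClopen) hU hUA
      exact ⟨V, hVA, hV, hVU, fun h => absurd h hj⟩
  choose V hVA hV hVU hVj₀ using hcopy
  have hcol : ⋃ j, V j ⊆ T.column ⁻¹' {i} :=
    iUnion_subset fun j x hx => T.column_eq_of_mem (hVA j hx).1
  have hself (j) : T.atom i j ∩ ⋃ j', V j' = V j := by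
    refine Subset.antisymm ?_ fun x hx => ⟨(hVA j hx).1, mem_iUnion_of_mem j hx⟩
    rintro x ⟨hxj, hx⟩
    obtain ⟨j', hxj'⟩ := mem_iUnion.1 hx
    obtain rfl : j = j' := by_contra fun h =>
      (T.disjoint_atom h).notMem_of_mem_left hxj (hVA j' hxj').1
    exact hxj'
  have hother {i'} (h : i' ≠ i) (j) : T.atom i' j ∩ ⋃ j', V j' = ∅ :=
    eq_empty_of_forall_notMem fun x hx => h ((T.column_eq_of_mem hx.1).symm.trans (hcol hx.2))
  refine ⟨⋃ j, V j, ⟨isClopen_iUnion_of_finite hV, fun i' j j' => ?_⟩,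
    subset_inter (iUnion_subset fun j => (hVA j).trans inter_subset_right) hcol,
    (hself j₀).trans (hVj₀ j₀ rfl)⟩
  obtain rfl | h := eq_or_ne i' i
  · rw [hself, hself]
    exact (hVU j).trans (hVU j').symm
  · rw [hother h, hother h]
    exact KEquiv.refl ∅

end Vertical

end KRPartition

section Concatenation

variable {m : ℕ} (h : Fin (m + 1) → ℕ)

/-- The numbering of the levels of the column obtained by stacking columns of heights
`h 0, …, h m`. As in `KRPartition`, a column of height `h` has `h + 1` levels. -/
def concatEquiv :
    ((k : Fin (m + 1)) × Fin (h k + 1)) ≃ Fin (∑ k, (h k + 1) - 1 + 1) :=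
  finSigmaFinEquiv.trans (finCongr (Nat.sub_add_cancel (by simp [Fin.sum_univ_succ]; lia)).symm)

theorem concatEquiv_val (k : Fin (m + 1)) (j : Fin (h k + 1)) :
    (concatEquiv h ⟨k, j⟩ : ℕ) = ∑ l ∈ Finset.Iio k, (h l + 1) + j := by
  have hIio : Finset.Iio k = Finset.univ.map (Fin.castLEEmb k.2.le) := by
    ext l
    simp only [Finset.mem_Iio, Finset.mem_map, Finset.mem_univ, true_and]
    exact ⟨fun hl => ⟨⟨l, hl⟩, rfl⟩, by rintro ⟨l, rfl⟩; exact l.2⟩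
  simp [concatEquiv, finSigmaFinEquiv_apply, hIio]

theorem concatEquiv_symm_zero : (concatEquiv h).symm 0 = ⟨0, 0⟩ := by
  have hIio : Finset.Iio (0 : Fin (m + 1)) = ∅ := Finset.Iio_bot
  rw [Equiv.symm_apply_eq, Fin.ext_iff, concatEquiv_val, hIio]
  simp

theorem concatEquiv_symm_last : (concatEquiv h).symm (Fin.last _) = ⟨Fin.last m, Fin.last _⟩ := by
  rw [Equiv.symm_apply_eq, Fin.ext_iff, concatEquiv_val]
  simp [Fin.sum_univ_castSucc, Fin.Iio_last_eq_map]

end Concatenation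

namespace KRPartition.Slicing

variable {X : Type*} [TopologicalSpace X] [MeasurableSpace X] {K : Set (ProbabilityMeasure X)}
  {T : KRPartition X K} {κ : Type*} {len : κ → ℕ} (s : T.Slicing ((c : κ) × Fin (len c + 1)))

/-- The height of the concatenation of the subcolumns `⟨c, 0⟩, …, ⟨c, len c⟩`. -/
abbrev stackHeight (c : κ) : ℕ :=
  ∑ k, (T.height (s.col ⟨c, k⟩) + 1) - 1

/-- The levels of the concatenation of the subcolumns `⟨c, 0⟩, …, ⟨c, len c⟩`. -/
def stackLevel (c : κ) (r : Fin (s.stackHeight c + 1)) : Set X :=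
  let p := (concatEquiv fun k => T.height (s.col ⟨c, k⟩)).symm r
  s.level ⟨c, p.1⟩ p.2

theorem stackLevel_concatEquiv (c : κ) (k : Fin (len c + 1))
    (j : Fin (T.height (s.col ⟨c, k⟩) + 1)) :
    s.stackLevel c (concatEquiv _ ⟨k, j⟩) = s.level ⟨c, k⟩ j :=
  congrArg (fun p : (k : Fin (len c + 1)) × Fin (T.height (s.col ⟨c, k⟩) + 1) =>
    s.level ⟨c, p.1⟩ p.2) (Equiv.symm_apply_apply _ _)

theorem stackLevel_zero (c : κ) : s.stackLevel c 0 = s.level ⟨c, 0⟩ 0 := by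
  rw [stackLevel, concatEquiv_symm_zero]

theorem stackLevel_last (c : κ) :
    s.stackLevel c (Fin.last _) = s.level ⟨c, Fin.last _⟩ (Fin.last _) := by
  rw [stackLevel, concatEquiv_symm_last]

theorem existsUnique_mem_stackLevel (x : X) :
    ∃! p : (c : κ) × Fin (s.stackHeight c + 1), x ∈ s.stackLevel p.1 p.2 := by
  obtain ⟨⟨⟨c, k⟩, j⟩, hx, huniq⟩ := s.existsUnique_mem_level x
  refine ⟨⟨c, concatEquiv _ ⟨k, j⟩⟩, (s.stackLevel_concatEquiv c k j).ge hx, ?_⟩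
  rintro ⟨c', r⟩ (hr : x ∈ s.stackLevel c' r)
  obtain ⟨⟨k', j'⟩, rfl⟩ := (concatEquiv _).surjective r
  rw [stackLevel_concatEquiv] at hr
  cases huniq ⟨⟨c', k'⟩, j'⟩ hr
  rfl

/-- The KR-partition with one column for each `c : κ`, namely the concatenation of the
subcolumns `⟨c, 0⟩, …, ⟨c, len c⟩`. -/
noncomputable def stack [Fintype κ]
    (hs : ∀ c k j k' j', KEquiv K (s.level ⟨c, k⟩ j) (s.level ⟨c, k'⟩ j')) : KRPartition X K where
  numCols := Fintype.card κ
  height i := s.stackHeight ((Fintype.equivFin κ).symm i)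
  atom i r := s.stackLevel ((Fintype.equivFin κ).symm i) r
  clopen _ _ := s.isClopen_level _ _
  equivK _ _ _ := hs _ _ _ _ _
  partition x := (Equiv.existsUnique_congr (Equiv.sigmaCongrLeft (Fintype.equivFin κ).symm)
    fun _ => Iff.rfl).2 (s.existsUnique_mem_stackLevel x)

variable [Fintype κ] (hs : ∀ c k j k' j', KEquiv K (s.level ⟨c, k⟩ j) (s.level ⟨c, k'⟩ j'))

theorem base_stack : (s.stack hs).base = ⋃ c, s.level ⟨c, 0⟩ 0 :=
  (iUnion_congr fun _ => s.stackLevel_zero _).trans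
    ((Fintype.equivFin κ).symm.iSup_comp (g := fun c => s.level ⟨c, 0⟩ 0))

theorem top_stack : (s.stack hs).top = ⋃ c, s.level ⟨c, Fin.last _⟩ (Fin.last _) :=
  (iUnion_congr fun _ => s.stackLevel_last _).trans
    ((Fintype.equivFin κ).symm.iSup_comp (g := fun c => s.level ⟨c, Fin.last _⟩ (Fin.last _)))

theorem stack_refines : (s.stack hs).Refines T := by
  refine ⟨?_, ?_, fun i => ?_⟩
  · rw [base_stack]
    exact iUnion_subset fun c => inter_subset_left.trans (subset_iUnion (fun i => T.atom i 0) _)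
  · rw [top_stack]
    exact iUnion_subset fun c =>
      inter_subset_left.trans (subset_iUnion (fun i => T.atom i (Fin.last _)) _)
  · set c := (Fintype.equivFin κ).symm i
    refine ⟨len c, fun k => s.col ⟨c, k⟩, fun k => s.level ⟨c, k⟩, fun k j => inter_subset_left,
      ?_, fun k j hlt => ?_⟩
    · exact Nat.sub_add_cancel (by simp [Fin.sum_univ_succ]; lia)
    · exact (congrArg (s.stackLevel c) (Fin.ext
        (concatEquiv_val (fun k => T.height (s.col ⟨c, k⟩)) k j).symm)).trans
          (s.stackLevel_concatEquiv c k j)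

end KRPartition.Slicing

section Itinerary

variable {τ : Type*} [LinearOrder τ] [BoundedOrder τ]

/-- The sets of indices through which a column of the refined KR-partition passes, in increasing
order, from `⊥` to `⊤`. -/
abbrev Itinerary (τ : Type*) [LinearOrder τ] [BoundedOrder τ] : Type _ :=
  {c : Finset τ // ⊥ ∈ c ∧ ⊤ ∈ c}

namespace Itinerary

/-- The number of steps of an itinerary, which has one more stop than that. -/
def length (c : Itinerary τ) : ℕ :=
  c.1.card - 1

/-- The increasing enumeration of the stops of an itinerary. -/
def visit (c : Itinerary τ) : Fin (c.length + 1) ≃o c.1 :=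
  c.1.orderIsoOfFin (Nat.sub_add_cancel (Finset.card_pos.2 ⟨⊥, c.2.1⟩)).symm

theorem visit_zero (c : Itinerary τ) : (c.visit 0 : τ) = ⊥ :=
  le_bot_iff.1 (c.visit.le_symm_apply (y := ⟨⊥, c.2.1⟩).1 (Fin.zero_le _))

theorem visit_last (c : Itinerary τ) : (c.visit (Fin.last _) : τ) = ⊤ :=
  top_le_iff.1 (c.visit.symm_apply_le (y := ⟨⊤, c.2.2⟩).1 (Fin.le_last _))

variable {X : Type*} [TopologicalSpace X] [Fintype τ]

open Classical in
/-- The itinerary of a point through the clopen sets `E t`, with `⊥` and `⊤` added. -/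
noncomputable def through (E : τ → Set X) (hE : ∀ t, IsClopen (E t)) :
    LocallyConstant X (Itinerary τ) where
  toFun x := ⟨({t | t = ⊥ ∨ t = ⊤ ∨ x ∈ E t} : Finset τ), by simp⟩
  isLocallyConstant := (IsLocallyConstant.iff_eventually_eq _).2 fun x => by
    have hmem : ∀ᶠ y in nhds x, ∀ t, y ∈ E t ↔ x ∈ E t := Filter.eventually_all.2 fun t => by
      by_cases hx : x ∈ E t
      · filter_upwards [(hE t).isOpen.mem_nhds hx] with y hy using iff_of_true hy hx
      · filter_upwards [(hE t).compl.isOpen.mem_nhds hx] with y hy using iff_of_false hy hx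
    filter_upwards [hmem] with y hy
    simp only [hy]

theorem inter_preimage_through {E : τ → Set X} (hE : ∀ t, IsClopen (E t))
    (hsub : ∀ t, E t ⊆ E ⊥) (htop : E ⊤ = E ⊥) {c : Itinerary τ} {t : τ} (ht : t ∈ c.1) :
    E t ∩ through E hE ⁻¹' {c} = E ⊥ ∩ through E hE ⁻¹' {c} := by
  refine Subset.antisymm (inter_subset_inter_left _ (hsub t)) ?_
  rintro x ⟨hx, rfl⟩
  obtain rfl | rfl | hxt : t = ⊥ ∨ t = ⊤ ∨ x ∈ E t := by simpa [through] using ht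
  exacts [⟨hx, rfl⟩, ⟨htop ▸ hx, rfl⟩, ⟨hxt, rfl⟩]

theorem inter_preimage_through_eq_empty {E : τ → Set X} (hE : ∀ t, IsClopen (E t))
    {c : Itinerary τ} {t : τ} (ht : t ∉ c.1) : E t ∩ through E hE ⁻¹' {c} = ∅ := by
  refine eq_empty_of_forall_notMem ?_
  rintro x ⟨hx, rfl⟩
  simp [through, hx] at ht

end Itinerary

end Itinerary

namespace KRPartition.Slicing

variable {X : Type*} [TopologicalSpace X] [MeasurableSpace X] {K : Set (ProbabilityMeasure X)}
  {T : KRPartition X K} {τ : Type*} [LinearOrder τ] [BoundedOrder τ] (s : T.Slicing τ)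

variable (f : LocallyConstant X (Itinerary τ)) (hmem : ∀ x, s.label x ∈ (f x).1)
  (hf : ∀ c, ∀ t ∈ c.1, ∀ t' ∈ c.1, ∀ j j',
    KEquiv K (s.level t j ∩ f ⁻¹' {c}) (s.level t' j' ∩ f ⁻¹' {c}))

/-- The labelling of the points by their itinerary and by the position of their subcolumn in it. -/
noncomputable def stopLabel : LocallyConstant X ((c : Itinerary τ) × Fin (c.length + 1)) :=
  partitionIndex (fun p => s.label ⁻¹' {(p.1.visit p.2 : τ)} ∩ f ⁻¹' {p.1})
    (fun p => ((isClopen_fiber s.label _).inter (isClopen_fiber f p.1)).isOpen) fun x => by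
      refine ⟨⟨f x, (f x).visit.symm ⟨s.label x, hmem x⟩⟩, by simp, ?_⟩
      rintro ⟨_, k⟩ ⟨hk, rfl⟩
      rw [Sigma.mk.injEq, heq_iff_eq, OrderIso.eq_symm_apply]
      exact ⟨rfl, Subtype.ext hk.symm⟩

theorem inter_preimage_stopLabel (p : (c : Itinerary τ) × Fin (c.length + 1))
    (j : Fin (T.height (s.col (p.1.visit p.2)) + 1)) :
    T.atom (s.col (p.1.visit p.2)) j ∩ s.stopLabel f hmem ⁻¹' {p} =
      s.level (p.1.visit p.2) j ∩ f ⁻¹' {p.1} := by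
  rw [level, inter_assoc]
  exact congrArg _ preimage_partitionIndex

/-- The subcolumns of `s` cut according to the labelling `f` by itineraries; the pieces labelled `c`
are indexed by the stops of `c`. -/
noncomputable def cut : T.Slicing ((c : Itinerary τ) × Fin (c.length + 1)) where
  label := s.stopLabel f hmem
  col p := s.col (p.1.visit p.2)
  col_label x := by
    obtain ⟨h, -⟩ := partitionIndex_eq_iff.1 (rfl : s.stopLabel f hmem x = _)
    exact (congrArg s.col h).symm.trans (s.col_label x)
  equivK p j j' := by
    simpa only [inter_preimage_stopLabel] using hf p.1 _ (p.1.visit p.2).2 _ (p.1.visit p.2).2 j j'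

theorem level_cut (p : (c : Itinerary τ) × Fin (c.length + 1))
    (j : Fin (T.height (s.col (p.1.visit p.2)) + 1)) :
    (s.cut f hmem hf).level p j = s.level (p.1.visit p.2) j ∩ f ⁻¹' {p.1} :=
  s.inter_preimage_stopLabel f hmem p j

variable {s f} in
theorem exists_refines_of_itinerary [Finite τ] (hmem : ∀ x, s.label x ∈ (f x).1)
    (hf : ∀ c, ∀ t ∈ c.1, ∀ t' ∈ c.1, ∀ j j',
      KEquiv K (s.level t j ∩ f ⁻¹' {c}) (s.level t' j' ∩ f ⁻¹' {c})) :
    ∃ S : KRPartition X K, S.Refines T ∧ S.base ⊆ s.level ⊥ 0 ∧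
      S.top ⊆ s.level ⊤ (Fin.last _) := by
  have := Fintype.ofFinite τ
  have hcut (c k j k' j') :
      KEquiv K ((s.cut f hmem hf).level ⟨c, k⟩ j) ((s.cut f hmem hf).level ⟨c, k'⟩ j') := by
    exact (s.level_cut f hmem hf ⟨c, k⟩ j) ▸ (s.level_cut f hmem hf ⟨c, k'⟩ j') ▸
      hf c _ (c.visit k).2 _ (c.visit k').2 j j'
  refine ⟨(s.cut f hmem hf).stack hcut, stack_refines _ _, ?_, ?_⟩
  · rw [base_stack]
    refine iUnion_subset fun c => (s.level_cut f hmem hf ⟨c, 0⟩ 0).subset.trans ?_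
    exact inter_subset_left.trans (congrArg (fun t => s.level t 0) c.visit_zero).subset
  · rw [top_stack]
    refine iUnion_subset fun c =>
      (s.level_cut f hmem hf ⟨c, Fin.last _⟩ (Fin.last _)).subset.trans ?_
    exact inter_subset_left.trans (congrArg (fun t => s.level t (Fin.last _)) c.visit_last).subset

theorem exists_itinerary [Finite τ] [OpensMeasurableSpace X] (hne : K.Nonempty)
    (hgood : Good K) (hfull : ∀ μ ∈ K, FullSupport μ) {E : τ → Set X} (hE : ∀ t, IsClopen (E t))
    (hsub : ∀ t, E t ⊆ E ⊥) (htop : E ⊤ = E ⊥) (hEK : ∀ t, KEquiv K (E t) (s.level t 0)) :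
    ∃ f : LocallyConstant X (Itinerary τ), (∀ x, s.label x ∈ (f x).1) ∧
      ∀ c, ∀ t ∈ c.1, ∀ t' ∈ c.1, ∀ j j',
        KEquiv K (s.level t j ∩ f ⁻¹' {c}) (s.level t' j' ∩ f ⁻¹' {c}) := by
  have := Fintype.ofFinite τ
  obtain ⟨f, hf⟩ := exists_locallyConstant_of_kEquiv hne hgood hfull (Itinerary.through E hE)
    (partitionIndex (fun p => s.level p.1 p.2) (fun p => (s.isClopen_level p.1 p.2).isOpen)
      s.existsUnique_mem_level)
    (κ := (t : τ) × Fin (T.height (s.col t) + 1)) (A := fun p => E p.1)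
    (B := fun p => s.level p.1 p.2)
    (fun p => (hEK p.1).trans (s.equivK p.1 0 p.2)) (fun p => hE p.1)
    (fun p => s.isClopen_level p.1 p.2) fun _ => by rw [preimage_partitionIndex]
  refine ⟨f, fun x => ?_, fun c t ht t' ht' j j' => ?_⟩
  · obtain ⟨⟨t, j⟩, hx, -⟩ := s.existsUnique_mem_level x
    by_contra hmem
    rw [hx.2] at hmem
    have hempty : s.level t j ∩ f ⁻¹' {f x} = ∅ :=
      (Itinerary.inter_preimage_through_eq_empty hE hmem ▸ hf ⟨t, j⟩ (f x)).eq_empty hne hfull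
        ((s.isClopen_level t j).inter (isClopen_fiber f _)).isOpen
    exact eq_empty_iff_forall_notMem.1 hempty x ⟨hx, rfl⟩
  · have hcopy := hf ⟨t, j⟩ c
    have hcopy' := hf ⟨t', j'⟩ c
    rw [Itinerary.inter_preimage_through hE hsub htop ‹_›] at hcopy hcopy'
    exact hcopy.trans hcopy'.symm

theorem exists_refines [Finite τ] [OpensMeasurableSpace X] (hne : K.Nonempty)
    (hgood : Good K) (hfull : ∀ μ ∈ K, FullSupport μ)
    (htop : KEquiv K (s.level ⊤ 0) (s.level ⊥ 0))
    (hlt : ∀ t, t ≠ ⊥ → t ≠ ⊤ → ∀ μ ∈ K, μ (s.level t 0) < μ (s.level ⊥ 0)) :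
    ∃ S : KRPartition X K, S.Refines T ∧ S.base ⊆ s.level ⊥ 0 ∧
      S.top ⊆ s.level ⊤ (Fin.last _) := by
  have hcopy (t) : ∃ E ⊆ s.level ⊥ 0, IsClopen E ∧ KEquiv K E (s.level t 0) ∧
      (t = ⊥ ∨ t = ⊤ → E = s.level ⊥ 0) := by
    by_cases ht : t = ⊥ ∨ t = ⊤
    · refine ⟨_, Subset.rfl, s.isClopen_level ⊥ 0, ?_, fun _ => rfl⟩
      rcases ht with rfl | rfl
      exacts [KEquiv.refl _, htop.symm]
    · obtain ⟨E, hE, hsub, hEK⟩ := hgood _ _ (s.isClopen_level t 0) (s.isClopen_level ⊥ 0)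
        (hlt t (fun h => ht (.inl h)) fun h => ht (.inr h))
      exact ⟨E, hsub, hE, hEK, fun h => absurd h ht⟩
  choose E hsub hE hEK hEeq using hcopy
  have hbot : E ⊥ = s.level ⊥ 0 := hEeq ⊥ (.inl rfl)
  obtain ⟨f, hmem, hf⟩ := s.exists_itinerary hne hgood hfull hE (fun t => hbot ▸ hsub t)
    ((hEeq ⊤ (.inr rfl)).trans hbot.symm) hEK
  exact exists_refines_of_itinerary hmem hf

end KRPartition.Slicing

section Smallness

variable {X : Type*} [TopologicalSpace X] [MeasurableSpace X] {K : Set (ProbabilityMeasure X)}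

theorem continuous_measure_of_isClopen [OpensMeasurableSpace X] [HasOuterApproxClosed X]
    {A : Set X} (hA : IsClopen A) : Continuous fun μ : ProbabilityMeasure X => μ A :=
  continuous_iff_continuousAt.2 fun _ =>
    ProbabilityMeasure.tendsto_measure_of_isClopen_of_tendsto Filter.tendsto_id hA

theorem exists_pos_forall_le_measure [OpensMeasurableSpace X] [HasOuterApproxClosed X]
    (hK : IsCompact K) (hfull : ∀ μ ∈ K, FullSupport μ) {A : Set X} (hA : IsClopen A)
    (hAne : A.Nonempty) : ∃ δ : NNReal, 0 < δ ∧ ∀ μ ∈ K, δ ≤ μ A := by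
  obtain rfl | hne := K.eq_empty_or_nonempty
  · exact ⟨1, one_pos, by simp⟩
  · obtain ⟨μ, hμ, hmin⟩ :=
      hK.exists_isMinOn hne (continuous_measure_of_isClopen hA).continuousOn
    exact ⟨μ A, hfull μ hμ A hA.isOpen hAne, fun ν hν => hmin hν⟩

variable [BorelSpace X] [CompactSpace X] [TopologicalSpace.MetrizableSpace X]
  [TotallyDisconnectedSpace X]

theorem exists_isClopen_measure_lt (μ : ProbabilityMeasure X) {O : Set X} (hO : IsOpen O) {x : X}
    (hx : x ∈ O) {δ : NNReal} (hμx : μ {x} < δ) :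
    ∃ W, (IsClopen W ∧ x ∈ W ∧ W ⊆ O) ∧ μ W < δ := by
  simp only [← ENNReal.coe_lt_coe, ProbabilityMeasure.ennreal_coeFn_eq_coeFn_toMeasure] at hμx ⊢
  obtain ⟨O', hxO', hO', hO'δ⟩ := exists_isOpen_lt_of_lt {x} _ hμx
  obtain ⟨W, hW, hxW, hWO⟩ := compact_exists_isClopen_in_isOpen (hO.inter hO') ⟨hx, hxO' rfl⟩
  exact ⟨W, ⟨hW, hxW, hWO.trans inter_subset_left⟩,
    (measure_mono (hWO.trans inter_subset_right)).trans_lt hO'δ⟩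

theorem exists_isClopen_forall_measure_lt (hK : IsCompact K) {O : Set X} (hO : IsOpen O) {x : X}
    (hx : x ∈ O) {δ : NNReal} (hKx : ∀ μ ∈ K, μ {x} < δ) :
    ∃ W, (IsClopen W ∧ x ∈ W ∧ W ⊆ O) ∧ ∀ μ ∈ K, μ W < δ := by
  have : Nonempty {W // IsClopen W ∧ x ∈ W ∧ W ⊆ O} :=
    let ⟨W, hW⟩ := compact_exists_isClopen_in_isOpen hO hx
    ⟨W, hW⟩
  obtain ⟨W, hW⟩ := hK.elim_directed_cover
    (fun W : {W // IsClopen W ∧ x ∈ W ∧ W ⊆ O} => {μ | μ (W : Set X) < δ})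
    (fun W => isOpen_lt (continuous_measure_of_isClopen W.2.1) continuous_const)
    (fun μ hμ =>
      let ⟨W, hW, hWδ⟩ := exists_isClopen_measure_lt μ hO hx (hKx μ hμ)
      mem_iUnion.2 ⟨⟨W, hW⟩, hWδ⟩)
    fun W W' => ⟨⟨W ∩ W', W.2.1.inter W'.2.1, ⟨W.2.2.1, W'.2.2.1⟩,
      inter_subset_left.trans W.2.2.2⟩,
      fun μ hμ => (μ.apply_mono inter_subset_left).trans_lt hμ,
      fun μ hμ => (μ.apply_mono inter_subset_right).trans_lt hμ⟩
  exact ⟨W, W.2, hW⟩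

theorem exists_locallyConstant_measure_fiber_lt (hK : IsCompact K)
    {δ : NNReal} (hδ : ∀ μ ∈ K, ∀ x, μ {x} < δ) :
    ∃ (M : ℕ) (f : LocallyConstant X (Fin M)), ∀ m, ∀ μ ∈ K, μ (f ⁻¹' {m}) < δ := by
  choose U hU hUδ using fun x =>
    exists_isClopen_forall_measure_lt hK isOpen_univ (mem_univ x) fun μ hμ => hδ μ hμ x
  obtain ⟨M, f, hf⟩ := exists_locallyConstant_fiber_subset (fun x => (hU x).1.isOpen)
    (iUnion_eq_univ_iff.2 fun x => ⟨x, (hU x).2.1⟩)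
  refine ⟨M, f, fun m μ hμ => ?_⟩
  obtain ⟨x, hx⟩ := hf m
  exact (μ.apply_mono hx).trans_lt (hUδ x μ hμ)

end Smallness

section Ends

variable {X ι : Type*} [TopologicalSpace X] {A B : Set X}

/-- The labelling `f` with the additional labels `⊥` on `A` and `⊤` on `B \ A`. -/
noncomputable def relabelEnds (hA : IsClopen A) (hB : IsClopen B) (f : LocallyConstant X ι) :
    LocallyConstant X (WithBot (WithTop ι)) :=
  relabelOn hA ⊥ (relabelOn hB ⊤ (f.map fun i => WithBot.some (WithTop.some i)))

variable (hA : IsClopen A) (hB : IsClopen B) (f : LocallyConstant X ι)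

theorem preimage_relabelEnds_bot : relabelEnds hA hB f ⁻¹' {⊥} = A := by
  ext x
  by_cases hxA : x ∈ A <;> by_cases hxB : x ∈ B <;> simp [relabelEnds, relabelOn, hxA, hxB]

theorem preimage_relabelEnds_top (hAB : Disjoint A B) :
    relabelEnds hA hB f ⁻¹' {⊤} = B := by
  ext x
  by_cases hxA : x ∈ A
  · simp [relabelEnds, relabelOn, hxA, hAB.notMem_of_mem_left hxA, ← WithBot.coe_top]
  · by_cases hxB : x ∈ B <;> simp [relabelEnds, relabelOn, hxA, hxB, ← WithBot.coe_top]

theorem preimage_relabelEnds_coe (i : ι) :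
    relabelEnds hA hB f ⁻¹' {((i : WithTop ι) : WithBot (WithTop ι))} =
      ((univ \ A) \ B) ∩ f ⁻¹' {i} := by
  ext x
  by_cases hxA : x ∈ A <;> by_cases hxB : x ∈ B <;>
    simp [relabelEnds, relabelOn, hxA, hxB, ← WithBot.coe_top]

end Ends

namespace KRPartition

variable {X : Type*} [TopologicalSpace X] [MeasurableSpace X] {K : Set (ProbabilityMeasure X)}
  {T : KRPartition X K} {ι : Type*} {A B R : Set X}

theorem IsVertical.exists_locallyConstant [OpensMeasurableSpace X] [Finite ι]
    (hR : T.IsVertical R) (hne : K.Nonempty) (hgood : Good K) (hfull : ∀ μ ∈ K, FullSupport μ)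
    (f : LocallyConstant X ι) :
    ∃ g : LocallyConstant X ι, ∀ i j m,
      KEquiv K (T.atom i j ∩ R ∩ g ⁻¹' {m}) (T.atom i 0 ∩ R ∩ f ⁻¹' {m}) := by
  obtain ⟨g, hg⟩ := exists_locallyConstant_of_kEquiv hne hgood hfull f T.address
    (A := fun p => T.atom p.1 0 ∩ R) (B := fun p => T.atom p.1 p.2 ∩ R)
    (fun p => hR.equivK p.1 0 p.2) (fun p => (T.clopen p.1 0).inter hR.isClopen)
    (fun p => (T.clopen p.1 p.2).inter hR.isClopen) fun p x hx => T.address_eq_iff.2 hx.1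
  exact ⟨g, fun i j => hg ⟨i, j⟩⟩

/-- The label of a point which is neither in the vertical set starting the new columns nor in the
one finishing them consists of its column and of its label by `g`. -/
noncomputable def sliceLabel (T : KRPartition X K) (hA : IsClopen A) (hB : IsClopen B)
    (g : LocallyConstant X ι) : LocallyConstant X (WithBot (WithTop (Fin T.numCols ×ₗ ι))) :=
  relabelEnds hA hB
    ⟨_, T.column.isLocallyConstant.comp₂ g.isLocallyConstant fun c m => toLex (c, m)⟩

theorem column_eq_of_sliceLabel_eq (hA : IsClopen A) (hB : IsClopen B) {i i' : Fin T.numCols}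
    (hAi : A ⊆ T.column ⁻¹' {i}) (hBi' : B ⊆ T.column ⁻¹' {i'}) (hAB : Disjoint A B)
    (g : LocallyConstant X ι) {x : X} {t} (ht : T.sliceLabel hA hB g x = t) :
    WithBot.recBotCoe i (WithTop.recTopCoe i' fun p => (ofLex p).1) t = T.column x := by
  induction t using WithBot.recBotCoe with
  | bot => exact (hAi ((preimage_relabelEnds_bot hA hB _).subset ht)).symm
  | coe t =>
    induction t using WithTop.recTopCoe with
    | top => exact (hBi' ((preimage_relabelEnds_top hA hB _ hAB).subset ht)).symm
    | coe p =>
      have hp := ((preimage_relabelEnds_coe hA hB _ p).subset ht).2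
      exact (congrArg (fun p => (ofLex p).1) hp).symm

theorem atom_inter_preimage_sliceLabel_coe (hA : IsClopen A) (hB : IsClopen B)
    (g : LocallyConstant X ι) (c : Fin T.numCols) (m : ι) (j : Fin (T.height c + 1)) :
    T.atom c j ∩ T.sliceLabel hA hB g ⁻¹' {↑(↑(toLex (c, m)) : WithTop (Fin T.numCols ×ₗ ι))} =
      T.atom c j ∩ ((univ \ A) \ B) ∩ g ⁻¹' {m} := by
  rw [sliceLabel, preimage_relabelEnds_coe, ← inter_assoc]
  ext x
  refine and_congr_right fun hx => ?_
  simp [T.column_eq_of_mem hx.1]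

/-- The slicing of `T` into the subcolumn `A` of index `⊥`, the subcolumn `B` of index `⊤`, and the
pieces into which a labelling `g` cuts what `A` and `B` leave of each column. -/
noncomputable def slicingOfEnds (hA : T.IsVertical A) (hB : T.IsVertical B) (hAB : Disjoint A B)
    {i i' : Fin T.numCols} (hAi : A ⊆ T.column ⁻¹' {i}) (hBi' : B ⊆ T.column ⁻¹' {i'})
    (g : LocallyConstant X ι) (hg : ∀ c j j' m, KEquiv K
      (T.atom c j ∩ ((univ \ A) \ B) ∩ g ⁻¹' {m}) (T.atom c j' ∩ ((univ \ A) \ B) ∩ g ⁻¹' {m})) :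
    T.Slicing (WithBot (WithTop (Fin T.numCols ×ₗ ι))) where
  label := T.sliceLabel hA.isClopen hB.isClopen g
  col := WithBot.recBotCoe i (WithTop.recTopCoe i' fun p => (ofLex p).1)
  col_label _ := column_eq_of_sliceLabel_eq _ _ hAi hBi' hAB g rfl
  equivK t j j' := by
    cases t with
    | bot =>
      have hbot : T.IsVertical (T.sliceLabel hA.isClopen hB.isClopen g ⁻¹' {⊥}) := by
        rwa [sliceLabel, preimage_relabelEnds_bot]
      exact hbot.equivK i j j'
    | coe t =>
      cases t with
      | top =>
        have htop : T.IsVertical (T.sliceLabel hA.isClopen hB.isClopen g ⁻¹' {⊤}) := by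
          rwa [sliceLabel, preimage_relabelEnds_top _ _ _ hAB]
        exact htop.equivK i' j j'
      | coe p =>
        have hcoe := T.atom_inter_preimage_sliceLabel_coe hA.isClopen hB.isClopen g p.1 p.2
        exact hcoe j ▸ hcoe j' ▸ hg p.1 j j' p.2

theorem exists_slicing [OpensMeasurableSpace X] [Finite ι]
    (hne : K.Nonempty) (hgood : Good K) (hfull : ∀ μ ∈ K, FullSupport μ)
    (hA : T.IsVertical A) (hB : T.IsVertical B) (hAB : Disjoint A B) {i i' : Fin T.numCols}
    (hAi : A ⊆ T.column ⁻¹' {i}) (hBi' : B ⊆ T.column ⁻¹' {i'}) (f : LocallyConstant X ι) :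
    ∃ s : T.Slicing (WithBot (WithTop (Fin T.numCols ×ₗ ι))),
      s.level ⊥ 0 = T.atom i 0 ∩ A ∧ s.level ⊤ 0 = T.atom i' 0 ∩ B ∧
      s.level ⊤ (Fin.last _) = T.atom i' (Fin.last _) ∩ B ∧
      ∀ t, t ≠ ⊥ → t ≠ ⊤ → ∃ m, ∀ μ ∈ K, μ (s.level t 0) ≤ μ (f ⁻¹' {m}) := by
  have hR : T.IsVertical ((univ \ A) \ B) :=
    (isVertical_univ.sdiff hA (subset_univ A)).sdiff hB
      (subset_sdiff.2 ⟨subset_univ B, hAB.symm⟩)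
  obtain ⟨g, hg⟩ := hR.exists_locallyConstant hne hgood hfull f
  refine ⟨slicingOfEnds hA hB hAB hAi hBi' g fun c j j' m => (hg c j m).trans (hg c j' m).symm,
    congrArg (T.atom i 0 ∩ ·) (preimage_relabelEnds_bot hA.isClopen hB.isClopen _),
    congrArg (T.atom i' 0 ∩ ·) (preimage_relabelEnds_top hA.isClopen hB.isClopen _ hAB),
    congrArg (T.atom i' (Fin.last _) ∩ ·) (preimage_relabelEnds_top hA.isClopen hB.isClopen _ hAB),
    fun t hbot htop => ?_⟩
  cases t with
  | bot => exact absurd rfl hbot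
  | coe t =>
    cases t with
    | top => exact absurd rfl htop
    | coe p =>
      refine ⟨p.2, fun μ hμ => ?_⟩
      calc μ _ = μ (T.atom p.1 0 ∩ ((univ \ A) \ B) ∩ g ⁻¹' {p.2}) :=
            congrArg μ (T.atom_inter_preimage_sliceLabel_coe hA.isClopen hB.isClopen g p.1 p.2 0)
        _ = μ (T.atom p.1 0 ∩ ((univ \ A) \ B) ∩ f ⁻¹' {p.2}) := hg p.1 0 p.2 μ hμ
        _ ≤ μ (f ⁻¹' {p.2}) := μ.apply_mono inter_subset_right

end KRPartition

namespace KRPartition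

variable {X : Type*} [TopologicalSpace X] [MeasurableSpace X] {K : Set (ProbabilityMeasure X)}
  {T : KRPartition X K} {A : Set X} {i i' : Fin T.numCols}

theorem IsVertical.measure_atom_inter_le (hA : T.IsVertical A) (hAi : A ⊆ T.column ⁻¹' {i})
    {μ : ProbabilityMeasure X} (hμ : μ ∈ K) (j : Fin (T.height i + 1))
    (j' : Fin (T.height i' + 1)) : μ (T.atom i' j' ∩ A) ≤ μ (T.atom i j ∩ A) := by
  obtain rfl | h := eq_or_ne i' i
  · exact (hA.equivK i' j' j μ hμ).le
  · have hempty : T.atom i' j' ∩ A = ∅ := eq_empty_of_forall_notMem fun x hx =>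
      h ((T.column_eq_of_mem hx.1).symm.trans (hAi hx.2))
    simp [hempty]

variable [BorelSpace X] [CompactSpace X] [TopologicalSpace.MetrizableSpace X]
  [TotallyDisconnectedSpace X] {O O' : Set X} {x y : X}

theorem exists_isVertical_measure_atom_inter_lt (hK : IsCompact K)
    (hatom : ∀ μ ∈ K, Atomless μ) (hfull : ∀ μ ∈ K, FullSupport μ) (hgood : Good K)
    (hO : IsOpen O) (hxO : x ∈ O) {j : Fin (T.height i + 1)} (hx : x ∈ T.atom i j) {δ : NNReal}
    (hδ : 0 < δ) :
    ∃ A, T.IsVertical A ∧ A ⊆ T.column ⁻¹' {i} ∧ x ∈ A ∧ T.atom i j ∩ A ⊆ O ∧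
      ∀ μ ∈ K, μ (T.atom i j ∩ A) < δ := by
  obtain ⟨U, ⟨hU, hxU, hUO⟩, hUδ⟩ := exists_isClopen_forall_measure_lt hK
    (hO.inter (T.clopen i j).isOpen) ⟨hxO, hx⟩ fun μ hμ => (hatom μ hμ x).trans_lt hδ
  obtain ⟨A, hA, hAi, rfl⟩ := isVertical_univ.exists_subset hgood hfull j hU
    (subset_inter (hUO.trans inter_subset_right) (subset_univ U))
  exact ⟨A, hA, hAi.trans inter_subset_right, hxU.2, hUO.trans inter_subset_left, hUδ⟩

theorem exists_isVertical_pair (hK : IsCompact K) (hatom : ∀ μ ∈ K, Atomless μ)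
    (hfull : ∀ μ ∈ K, FullSupport μ) (hgood : Good K) (hO : IsOpen O) (hO' : IsOpen O')
    (hxO : x ∈ O) (hx : x ∈ T.atom i 0) (hyO' : y ∈ O') (hy : y ∈ T.atom i' (Fin.last _)) :
    ∃ A B, T.IsVertical A ∧ T.IsVertical B ∧ Disjoint A B ∧ A ⊆ T.column ⁻¹' {i} ∧
      B ⊆ T.column ⁻¹' {i'} ∧ x ∈ A ∧ T.atom i 0 ∩ A ⊆ O ∧
      T.atom i' (Fin.last _) ∩ B ⊆ O' ∧ KEquiv K (T.atom i' 0 ∩ B) (T.atom i 0 ∩ A) := by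
  obtain ⟨W, hW, hyW, hWO'⟩ :=
    compact_exists_isClopen_in_isOpen (hO'.inter (T.clopen i' (Fin.last _)).isOpen) ⟨hyO', hy⟩
  obtain ⟨δ, hδ, hδW⟩ := exists_pos_forall_le_measure hK hfull hW ⟨y, hyW⟩
  obtain ⟨A, hA, hAi, hxA, hAO, hAδ⟩ := exists_isVertical_measure_atom_inter_lt hK hatom hfull
    hgood hO hxO hx (half_pos hδ)
  have hroom : ∀ μ ∈ K, μ (T.atom i 0 ∩ A) < μ (W \ A) := fun μ hμ => by
    have hWA : W ⊆ W \ A ∪ T.atom i' (Fin.last _) ∩ A := by grind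
    have hsum : δ ≤ μ (W \ A) + μ (T.atom i 0 ∩ A) := calc
      δ ≤ μ W := hδW μ hμ
      _ ≤ μ (W \ A) + μ (T.atom i' (Fin.last _) ∩ A) :=
        (μ.apply_mono hWA).trans μ.apply_union_le
      _ ≤ μ (W \ A) + μ (T.atom i 0 ∩ A) := add_le_add le_rfl (hA.measure_atom_inter_le hAi hμ 0 _)
    have hsmall := hAδ μ hμ
    rw [← NNReal.coe_lt_coe] at hsmall ⊢
    rw [← NNReal.coe_le_coe] at hsum
    push_cast at hsmall hsum
    linarith
  obtain ⟨V, hV, hVW, hVA⟩ :=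
    hgood _ _ ((T.clopen i 0).inter hA.isClopen) (hW.diff hA.isClopen) hroom
  obtain ⟨B, hB, hBA, rfl⟩ := (isVertical_univ.sdiff hA (subset_univ A)).exists_subset hgood hfull
    (Fin.last (T.height i')) hV fun z hz => ⟨(hWO' (hVW hz).1).2, mem_univ z, (hVW hz).2⟩
  exact ⟨A, B, hA, hB, disjoint_right.2 fun z hz => (hBA hz).1.2, hAi,
    hBA.trans inter_subset_right, hxA, hAO, fun z hz => (hWO' (hVW hz).1).1,
    (hB.equivK i' 0 (Fin.last _)).trans hVA⟩

variable (T) in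
theorem exists_refines_base_subset_top_subset (hne : K.Nonempty) (hK : IsCompact K)
    (hatom : ∀ μ ∈ K, Atomless μ) (hfull : ∀ μ ∈ K, FullSupport μ) (hgood : Good K)
    (hO : IsOpen O) (hO' : IsOpen O') (hbase : (O ∩ T.base).Nonempty)
    (htop : (O' ∩ T.top).Nonempty) :
    ∃ S : KRPartition X K, S.Refines T ∧ S.base ⊆ O ∧ S.top ⊆ O' := by
  obtain ⟨x, hxO, hx⟩ := hbase
  obtain ⟨y, hyO', hy⟩ := htop
  obtain ⟨i, hx⟩ := mem_iUnion.1 hx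
  obtain ⟨i', hy⟩ := mem_iUnion.1 hy
  obtain ⟨A, B, hA, hB, hAB, hAi, hBi', hxA, hAO, hBO', hBA⟩ :=
    exists_isVertical_pair hK hatom hfull hgood hO hO' hxO hx hyO' hy
  obtain ⟨δ, hδ, hδA⟩ := exists_pos_forall_le_measure hK hfull
    ((T.clopen i 0).inter hA.isClopen) ⟨x, hx, hxA⟩
  obtain ⟨M, f, hf⟩ := exists_locallyConstant_measure_fiber_lt hK fun μ hμ x =>
    (hatom μ hμ x).trans_lt hδ
  obtain ⟨s, hbot, htop, hlast, hs⟩ := exists_slicing hne hgood hfull hA hB hAB hAi hBi' f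
  have hlt (t) (ht : t ≠ ⊥) (ht' : t ≠ ⊤) (μ) (hμ : μ ∈ K) :
      μ (s.level t 0) < μ (s.level ⊥ 0) := by
    obtain ⟨m, hm⟩ := hs t ht ht'
    rw [hbot]
    exact (hm μ hμ).trans_lt ((hf m μ hμ).trans_le (hδA μ hμ))
  obtain ⟨S, hS, hSbase, hStop⟩ :=
    s.exists_refines hne hgood hfull (by rwa [hbot, htop]) hlt
  exact ⟨S, hS, hSbase.trans (hbot.trans_subset hAO), hStop.trans (hlast.trans_subset hBO')⟩

end KRPartition

end DynSimplex

theorem exists_refinement_small_base_top_general {X : Type*} [MetricSpace X] [CompactSpace X]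
    [TotallyDisconnectedSpace X] [MeasurableSpace X] [BorelSpace X]
    {K : Set (ProbabilityMeasure X)} (hne : K.Nonempty) (hK : IsCompact K)
    (hatom : ∀ μ ∈ K, DynSimplex.Atomless μ) (hfull : ∀ μ ∈ K, DynSimplex.FullSupport μ)
    (hgood : DynSimplex.Good K) (T : DynSimplex.KRPartition X K) {ε : ℝ} (hε : 0 < ε) :
    ∃ S : DynSimplex.KRPartition X K, S.Refines T ∧
      Metric.diam S.base < ε ∧ Metric.diam S.top < ε := by
  have : Nonempty X := hne.some.nonempty
  obtain ⟨i, hi⟩ := T.exists_forall_atom_nonempty hne hfull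
  obtain ⟨x, hx⟩ := hi 0
  obtain ⟨y, hy⟩ := hi (Fin.last _)
  have hball (z : X) : z ∈ Metric.ball z (ε / 4) := Metric.mem_ball_self (by positivity)
  have hdiam {A : Set X} {z : X} (hA : A ⊆ Metric.ball z (ε / 4)) : Metric.diam A < ε := by
    have hA' := Metric.diam_mono hA Metric.isBounded_ball
    have hz := Metric.diam_ball (x := z) (r := ε / 4) (by positivity)
    linarith
  obtain ⟨S, hS, hbase, htop⟩ := T.exists_refines_base_subset_top_subset hne hK hatom hfull hgood
    (Metric.isOpen_ball (x := x)) (Metric.isOpen_ball (x := y))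
    ⟨x, hball x, Set.mem_iUnion_of_mem i hx⟩ ⟨y, hball y, Set.mem_iUnion_of_mem i hy⟩
  exact ⟨S, hS, hdiam hbase, hdiam htop⟩

theorem exists_refinement_small_base_top
    {X : Type*} [MetricSpace X] [CompactSpace X]
    [TotallyDisconnectedSpace X] [PerfectSpace X]
    [Nonempty X] [MeasurableSpace X] [BorelSpace X]
    (K : Set (MeasureTheory.ProbabilityMeasure X)) (hK : DynSimplex.DynamicalSimplex K)
    (T : DynSimplex.KRPartition X K) (ε : ℝ) (hε : 0 < ε) :
    ∃ S : DynSimplex.KRPartition X K, S.Refines T ∧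
      Metric.diam S.base < ε ∧ Metric.diam S.top < ε := by
  obtain ⟨hne, hcomp, -, hreg, hgood, -⟩ := hK
  exact exists_refinement_small_base_top_general hne hcomp (fun μ hμ => (hreg μ hμ).1)
    (fun μ hμ => (hreg μ hμ).2) hgood T hε
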